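/- There exists a constant C₁ > 0 such that for all sufficiently large integers Q: #{1 ≤ q ≤ Q : F(q) > C₁·(log log Q)²} ≤ Q/(log Q)², where F(q) = ∑_{r | q} (log r)/r. -/

import Mathlib

open Filter

/-- `F(q) = ∑_{r | q} (log₂ r)/r`. -/
noncomputable def Ffun (q : ℕ) : ℝ := ∑ r ∈ q.divisors, Real.logb 2 r / r

open ArithmeticFunction in
lemma aux_mertens (N : ℕ) (hN : 1 ≤ N) :
    ∑ d ∈ Finset.Ioc 0 N, vonMangoldt d / d ≤ Real.log N + 6 := by
  have hN0 : (0:ℝ) < N := by exact_mod_cast hN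
  have h1 : ∑ n ∈ Finset.Ioc 0 N, Real.log n
      = ∑ d ∈ Finset.Ioc 0 N, vonMangoldt d * ((N / d : ℕ) : ℝ) := by
    have : ∀ n ∈ Finset.Ioc 0 N, Real.log n
        = ∑ d ∈ Finset.Ioc 0 N, if d ∣ n then vonMangoldt d else 0 := by
      intro n hn
      rw [← vonMangoldt_sum, ← Finset.sum_filter]
      apply Finset.sum_congr _ (fun _ _ => rfl)
      ext d
      simp only [Finset.mem_Ioc] at hn
      simp only [Nat.mem_divisors, Finset.mem_filter, Finset.mem_Ioc]
      constructor
      · rintro ⟨h, -⟩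
        exact ⟨⟨Nat.pos_of_dvd_of_pos h hn.1, (Nat.le_of_dvd hn.1 h).trans hn.2⟩, h⟩
      · rintro ⟨-, h⟩
        exact ⟨h, by omega⟩
    rw [Finset.sum_congr rfl this, Finset.sum_comm]
    apply Finset.sum_congr rfl
    intro d hd
    rw [← Finset.sum_filter, Finset.sum_const, Nat.Ioc_filter_dvd_card_eq_div, nsmul_eq_mul,
      mul_comm]
  have h2 : ∑ n ∈ Finset.Ioc 0 N, Real.log n ≤ N * Real.log N := by
    calc _ ≤ ∑ n ∈ Finset.Ioc 0 N, Real.log N := by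
          apply Finset.sum_le_sum
          intro n hn
          simp only [Finset.mem_Ioc] at hn
          exact Real.log_le_log (by exact_mod_cast hn.1) (by exact_mod_cast hn.2)
      _ = _ := by simp
  have h3 : ∑ d ∈ Finset.Ioc 0 N, vonMangoldt d ≤ 6 * N := by
    have h := Chebyshev.psi_le_const_mul_self hN0.le
    have hl : Real.log 4 ≤ 2 := by
      have : Real.log 4 = 2 * Real.log 2 := by
        rw [show (4:ℝ) = 2 ^ 2 by norm_num, Real.log_pow]; norm_num
      have := Real.log_two_lt_d9
      linarith
    rw [Chebyshev.psi, Nat.floor_natCast] at h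
    nlinarith
  have h4 : N * ∑ d ∈ Finset.Ioc 0 N, vonMangoldt d / d
      ≤ ∑ d ∈ Finset.Ioc 0 N, vonMangoldt d * ((N / d : ℕ) : ℝ)
        + ∑ d ∈ Finset.Ioc 0 N, vonMangoldt d := by
    rw [Finset.mul_sum, ← Finset.sum_add_distrib]
    apply Finset.sum_le_sum
    intro d hd
    have hL : 0 ≤ vonMangoldt d := vonMangoldt_nonneg
    have : (N:ℝ) / d ≤ ((N / d : ℕ) : ℝ) + 1 := by
      have := (Nat.lt_floor_add_one ((N:ℝ) / d)).le
      rwa [Nat.floor_div_eq_div] at this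
    calc (N:ℝ) * (vonMangoldt d / d) = vonMangoldt d * (N / d) := by ring
      _ ≤ vonMangoldt d * (((N / d : ℕ) : ℝ) + 1) := by gcongr
      _ = _ := by ring
  have h5 : N * ∑ d ∈ Finset.Ioc 0 N, vonMangoldt d / d ≤ N * (Real.log N + 6) := by linarith
  exact le_of_mul_le_mul_left h5 hN0

open ArithmeticFunction in
lemma aux_G (q : ℕ) (hq : 1 ≤ q) (y : ℝ) (hy : 1 ≤ y) (hqy : Real.log q ≤ y) :
    ∑ d ∈ q.divisors, vonMangoldt d / d ≤ Real.log y + 7 := by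
  have hy0 : 0 < y := by linarith
  have hN : 1 ≤ ⌊y⌋₊ := Nat.floor_pos.mpr hy
  have hm := aux_mertens _ hN
  have hlog : Real.log (⌊y⌋₊ : ℝ) ≤ Real.log y :=
    Real.log_le_log (by exact_mod_cast hN) (Nat.floor_le hy0.le)
  rw [← Finset.sum_filter_add_sum_filter_not _ (fun d : ℕ => (d:ℝ) ≤ y)]
  have ha : ∑ d ∈ q.divisors with ((d : ℕ) : ℝ) ≤ y, vonMangoldt d / d
      ≤ ∑ d ∈ Finset.Ioc 0 ⌊y⌋₊, vonMangoldt d / d := by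
    apply Finset.sum_le_sum_of_subset_of_nonneg
    · intro d hd
      simp only [Finset.mem_filter] at hd
      simp only [Finset.mem_Ioc]
      exact ⟨Nat.pos_of_mem_divisors hd.1, Nat.le_floor hd.2⟩
    · intro d _ _
      exact div_nonneg vonMangoldt_nonneg (by positivity)
  have hb : ∑ d ∈ q.divisors with ¬ ((d : ℕ) : ℝ) ≤ y, vonMangoldt d / d ≤ 1 := by
    calc _ ≤ ∑ d ∈ q.divisors with ¬ ((d : ℕ) : ℝ) ≤ y, vonMangoldt d / y := by
          apply Finset.sum_le_sum
          intro d hd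
          simp only [Finset.mem_filter, not_le] at hd
          have hL : 0 ≤ vonMangoldt d := vonMangoldt_nonneg
          have := hd.2.le
          gcongr
      _ ≤ ∑ d ∈ q.divisors, vonMangoldt d / y := by
          apply Finset.sum_le_sum_of_subset_of_nonneg (Finset.filter_subset _ _)
          intro d _ _
          exact div_nonneg vonMangoldt_nonneg hy0.le
      _ = Real.log q / y := by rw [← Finset.sum_div, vonMangoldt_sum]
      _ ≤ 1 := by rw [div_le_one hy0]; exact hqy
  linarith

open ArithmeticFunction in
lemma aux_FGH (q : ℕ) (hq : 1 ≤ q) :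
    ∑ r ∈ q.divisors, Real.log r / r
      ≤ (∑ d ∈ q.divisors, vonMangoldt d / d) * ∑ s ∈ q.divisors, (1:ℝ) / s := by
  have h1 : ∑ r ∈ q.divisors, Real.log r / r
      = ∑ d ∈ q.divisors, ∑ r ∈ q.divisors, if d ∣ r then vonMangoldt d / r else 0 := by
    rw [Finset.sum_comm]
    apply Finset.sum_congr rfl
    intro r hr
    rw [← vonMangoldt_sum, ← Finset.sum_filter, Finset.sum_div]
    apply Finset.sum_congr _ (fun _ _ => rfl)
    ext d
    simp only [Nat.mem_divisors] at hr
    simp only [Nat.mem_divisors, Finset.mem_filter]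
    constructor
    · rintro ⟨h, -⟩
      exact ⟨⟨h.trans hr.1, hr.2⟩, h⟩
    · rintro ⟨-, h⟩
      exact ⟨h, by rintro rfl; exact hr.2 (by simpa using hr.1)⟩
  rw [h1, Finset.sum_mul]
  apply Finset.sum_le_sum
  intro d hd
  have hd0 : 0 < d := Nat.pos_of_mem_divisors hd
  rw [← Finset.sum_filter, Finset.mul_sum]
  have hL : 0 ≤ vonMangoldt d := vonMangoldt_nonneg
  have h2 : ∑ r ∈ q.divisors with d ∣ r, vonMangoldt d / r
      = ∑ s ∈ (q.divisors.filter (fun r => d ∣ r)).image (fun r => r / d),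
          vonMangoldt d / d * (1 / (s:ℝ)) := by
    rw [Finset.sum_image]
    · apply Finset.sum_congr rfl
      intro r hr
      simp only [Finset.mem_filter] at hr
      obtain ⟨k, rfl⟩ := hr.2
      rw [Nat.mul_div_cancel_left _ hd0]
      push_cast
      rw [div_mul_div_comm, mul_one]
    · intro a ha b hb hab
      simp only [Finset.coe_filter, Set.mem_setOf_eq] at ha hb
      exact (Nat.div_left_inj ha.2 hb.2).mp hab
  rw [h2]
  apply Finset.sum_le_sum_of_subset_of_nonneg
  · intro s hs
    simp only [Finset.mem_image, Finset.mem_filter, Nat.mem_divisors] at hs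
    obtain ⟨r, ⟨⟨hr, hq0⟩, hdr⟩, rfl⟩ := hs
    exact Nat.mem_divisors.mpr ⟨(Nat.div_dvd_of_dvd hdr).trans hr, hq0⟩
  · intro s _ _
    positivity

lemma aux_H (q : ℕ) (hq : 1 ≤ q) (L : ℝ) (hL : 0 < L) :
    ∑ s ∈ q.divisors, (1:ℝ) / s ≤ 1 + L + (∑ r ∈ q.divisors, Real.log r / r) / L := by
  rw [← Finset.sum_filter_add_sum_filter_not _ (fun d : ℕ => (d:ℝ) ≤ Real.exp L)]
  have ha : ∑ d ∈ q.divisors with ((d : ℕ) : ℝ) ≤ Real.exp L, (1:ℝ) / d ≤ 1 + L := by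
    have h := harmonic_floor_le_one_add_log (Real.exp L) (Real.one_le_exp hL.le)
    rw [Real.log_exp] at h
    simp_rw [harmonic_eq_sum_Icc, Rat.cast_sum, Rat.cast_inv, Rat.cast_natCast] at h
    refine le_trans ?_ h
    simp_rw [one_div]
    apply Finset.sum_le_sum_of_subset_of_nonneg
    · intro d hd
      simp only [Finset.mem_filter] at hd
      simp only [Finset.mem_Icc]
      exact ⟨Nat.pos_of_mem_divisors hd.1, Nat.le_floor hd.2⟩
    · intro d _ _
      positivity
  have hb : ∑ d ∈ q.divisors with ¬ ((d : ℕ) : ℝ) ≤ Real.exp L, (1:ℝ) / d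
      ≤ (∑ r ∈ q.divisors, Real.log r / r) / L := by
    rw [Finset.sum_div]
    calc _ ≤ ∑ d ∈ q.divisors with ¬ ((d : ℕ) : ℝ) ≤ Real.exp L, Real.log d / d / L := by
          apply Finset.sum_le_sum
          intro d hd
          simp only [Finset.mem_filter, not_le] at hd
          have hd0 : (0:ℝ) < d := (Real.exp_pos L).trans hd.2
          have : L ≤ Real.log d := (Real.le_log_iff_exp_le hd0).mpr hd.2.le
          rw [le_div_iff₀ hL, one_div_mul_eq_div]
          gcongr
      _ ≤ _ := by
          apply Finset.sum_le_sum_of_subset_of_nonneg (Finset.filter_subset _ _)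
          intro d _ _
          have := Real.log_natCast_nonneg d
          positivity
  linarith

lemma aux_F (q : ℕ) (hq : 1 ≤ q) (y : ℝ) (hy : 1 ≤ y) (hqy : Real.log q ≤ y) :
    ∑ r ∈ q.divisors, Real.log r / r ≤ 6 * (Real.log y + 7) ^ 2 := by
  have hG := aux_G q hq y hy hqy
  have hF := aux_FGH q hq
  have hly := Real.log_nonneg hy
  set g := Real.log y + 7 with hg
  have hg7 : 7 ≤ g := by linarith
  have hH := aux_H q hq (2 * g) (by linarith)
  set H := ∑ s ∈ q.divisors, (1:ℝ) / s
  set F := ∑ r ∈ q.divisors, Real.log r / r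
  have hH0 : 0 ≤ H := Finset.sum_nonneg fun _ _ => by positivity
  have hFg : F ≤ g * H := hF.trans (mul_le_mul_of_nonneg_right hG hH0)
  have h1 : F / (2 * g) ≤ H / 2 := by
    rw [div_le_iff₀ (by linarith)]; linarith
  have h2 : H ≤ 2 + 4 * g := by linarith
  nlinarith

open Classical in
theorem stmt14 : ∃ C₁ > (0:ℝ), ∃ Q₀ : ℕ, ∀ Q : ℕ, Q₀ ≤ Q →
    (((Finset.Icc 1 Q).filter
        (fun q => C₁ * (Real.logb 2 (Real.logb 2 Q)) ^ 2 < Ffun q)).card : ℝ)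
      ≤ (Q : ℝ) / (Real.logb 2 Q) ^ 2 := by
  have hl2 : 0 < Real.log 2 := Real.log_pos (by norm_num)
  have hl2' : Real.log 2 ≤ 1 := by have := Real.log_two_lt_d9; linarith
  refine ⟨384 / Real.log 2, by positivity, ⌈Real.exp (Real.exp 1)⌉₊, ?_⟩
  intro Q hQ
  have hQe : Real.exp (Real.exp 1) ≤ Q := (Nat.le_ceil _).trans (by exact_mod_cast hQ)
  have hQ0 : (0:ℝ) < Q := (Real.exp_pos _).trans_le hQe
  have hy : Real.exp 1 ≤ Real.log Q := (Real.le_log_iff_exp_le hQ0).mpr hQe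
  have hy0 : 0 < Real.log Q := (Real.exp_pos _).trans_le hy
  have hy1 : 1 ≤ Real.log Q := (Real.one_le_exp zero_le_one).trans hy
  have hly : 1 ≤ Real.log (Real.log Q) := (Real.le_log_iff_exp_le hy0).mpr hy
  have hLL : Real.log (Real.log Q) ≤ Real.logb 2 (Real.logb 2 Q) := by
    have h1 : Real.log Q ≤ Real.logb 2 Q := by
      rw [Real.logb, le_div_iff₀ hl2]; nlinarith
    have h2 := Real.log_le_log hy0 h1
    rw [Real.logb, le_div_iff₀ hl2]
    nlinarith
  have hempty : (Finset.Icc 1 Q).filter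
        (fun q => 384 / Real.log 2 * (Real.logb 2 (Real.logb 2 Q)) ^ 2 < Ffun q) = ∅ := by
    rw [Finset.filter_eq_empty_iff]
    intro q hq
    rw [Finset.mem_Icc] at hq
    rw [not_lt]
    have hqQ : Real.log q ≤ Real.log Q :=
      Real.log_le_log (by exact_mod_cast hq.1) (by exact_mod_cast hq.2)
    have h := aux_F q hq.1 _ hy1 hqQ
    have hF : Ffun q = (∑ r ∈ q.divisors, Real.log r / r) / Real.log 2 := by
      rw [Ffun, Finset.sum_div]
      apply Finset.sum_congr rfl
      intro r _
      rw [Real.logb, div_right_comm]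
    rw [hF, div_mul_eq_mul_div]
    gcongr
    nlinarith
  rw [hempty]
  simp only [Finset.card_empty, Nat.cast_zero]
  positivity
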